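/- Let α, β, γ be real numbers with α > -1/2, α + β + γ > -3/2, and γ = −1/2. Define, for t ≥ 1, F(t) = ∫₀¹ s^{2α} (∫ₛ¹ u^β (u−s)^γ du) (∫ₜ^{t+1} v^β (v−s)^γ dv) ds, V(t) = ∫₀^{t+1} s^{2α} (∫_{max(s,t)}^{t+1} u^β (u−s)^γ du)² ds, C = ∫₀¹ s^{2α} (∫ₛ¹ u^β (u−s)^γ du)² ds, and r(t) = F(t) / (√C · √V(t)). Then there exists a constant c > 0 (depending on α, β, γ) such that lim_{t→+∞} t^{α+1/2} √(log t) · r(t) = c. -/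

import Mathlib

open MeasureTheory Filter intervalIntegral

theorem measurable_intervalIntegral {a b : ℝ → ℝ} {k : ℝ → ℝ → ℝ} (ha : Measurable a)
    (hb : Measurable b) (hk : Measurable (Function.uncurry k)) :
    Measurable fun s => ∫ u in a s..b s, k s u := by
  have key : ∀ {a b : ℝ → ℝ}, Measurable a → Measurable b →
      Measurable fun s => ∫ u in Set.Ioc (a s) (b s), k s u := by
    intro a b ha hb
    have h : Measurable (Function.uncurry fun s u => (Set.Ioc (a s) (b s)).indicator (k s) u) := by
      have hs : MeasurableSet {z : ℝ × ℝ | a z.1 < z.2 ∧ z.2 ≤ b z.1} :=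
        (measurableSet_lt (ha.comp measurable_fst) measurable_snd).inter
          (measurableSet_le measurable_snd (hb.comp measurable_fst))
      exact hk.indicator hs
    have h2 := (h.stronglyMeasurable.integral_prod_right (ν := volume)).measurable
    convert h2 using 2 with s
    rw [MeasureTheory.integral_indicator measurableSet_Ioc]
  exact (key ha hb).sub (key hb ha)

theorem abs_rpow_sub_one_le {p x : ℝ} (hp : -1 < p) (hx : 0 < x) (hx1 : x ≤ 1) :
    |x ^ p - 1| ≤ (1 + |p|) * (1 - x) * (1 + x ^ p) := by
  have hxp : 0 < x ^ p := Real.rpow_pos_of_pos hx p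
  have hK : 1 - x ≤ (1 + |p|) * (1 - x) := by nlinarith [abs_nonneg p]
  have hN : 0 ≤ (1 + |p|) * (1 - x) := by linarith
  rcases le_total 0 p with h0 | h0
  · have h1 : x ^ p ≤ 1 := Real.rpow_le_one hx.le hx1 h0
    rw [abs_of_nonpos (by linarith)]
    have : 1 - x ^ p ≤ (1 + |p|) * (1 - x) := by
      rcases le_total 1 p with h | h
      · have := one_add_mul_self_le_rpow_one_add (s := x - 1) (by linarith) h
        rw [add_sub_cancel] at this
        rw [abs_of_nonneg h0]
        nlinarith
      · have := Real.rpow_le_rpow_of_exponent_ge hx hx1 h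
        rw [Real.rpow_one] at this
        linarith
    nlinarith
  · have h1 : 1 ≤ x ^ p := Real.one_le_rpow_of_pos_of_le_one_of_nonpos hx hx1 h0
    rw [abs_of_nonneg (by linarith)]
    have h2 := Real.rpow_le_rpow_of_exponent_ge hx hx1 (by linarith : -p ≤ 1)
    rw [Real.rpow_one, Real.rpow_neg hx.le] at h2
    have h3 : x * x ^ p ≤ 1 := by
      rwa [le_inv_comm₀ hx hxp, ← one_div, le_div_iff₀ hx, mul_comm] at h2
    nlinarith

theorem abs_rpow_sub_rpow_le {p s T : ℝ} (hp : -1 < p) (hs : 0 < s) (hsT : s ≤ T) :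
    |s ^ p - T ^ p| ≤ (1 + |p|) * ((T - s) / T) * (T ^ p + s ^ p) := by
  have hT : 0 < T := hs.trans_le hsT
  have h := abs_rpow_sub_one_le hp (div_pos hs hT) ((div_le_one hT).2 hsT)
  rw [Real.div_rpow hs.le hT.le] at h
  have hTp : 0 < T ^ p := Real.rpow_pos_of_pos hT p
  have e1 : s ^ p - T ^ p = (s ^ p / T ^ p - 1) * T ^ p := by field_simp
  have e2 : (1 + |p|) * ((T - s) / T) * (T ^ p + s ^ p)
    = (1 + |p|) * (1 - s / T) * (1 + s ^ p / T ^ p) * T ^ p := by field_simp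
  rw [e1, e2, abs_mul, abs_of_pos hTp]
  gcongr

theorem integral_sub_rpow_neg_half (s x y : ℝ) :
    ∫ u in x..y, (u - s) ^ (-(1/2) : ℝ) = 2 * (√(y - s) - √(x - s)) := by
  rw [intervalIntegral.integral_comp_sub_right (fun u => u ^ (-(1/2) : ℝ)) s,
    integral_rpow (Or.inl (by norm_num)), Real.sqrt_eq_rpow, Real.sqrt_eq_rpow]
  norm_num
  ring

theorem intervalIntegrable_sub_rpow {γ : ℝ} (hγ : -1 < γ) (s x y : ℝ) :
    IntervalIntegrable (fun u => (u - s) ^ γ) volume x y := by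
  simpa using (intervalIntegral.intervalIntegrable_rpow' hγ (a := x - s) (b := y - s)).comp_sub_right s

theorem intervalIntegrable_rpow_mul_sub_rpow {β γ s x y : ℝ} (hγ : -1 < γ) (hx : 0 < x)
    (hxy : x ≤ y) : IntervalIntegrable (fun u => u ^ β * (u - s) ^ γ) volume x y := by
  refine (intervalIntegrable_sub_rpow hγ s x y).continuousOn_mul ?_
  rw [Set.uIcc_of_le hxy]
  exact continuousOn_id.rpow_const fun u hu => Or.inl (hx.trans_le hu.1).ne'

theorem integral_rpow_mul_sub_rpow_mem_Icc {β s x y l b : ℝ} (hx : 0 < x) (hsx : s ≤ x)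
    (hxy : x ≤ y) (hl : ∀ u ∈ Set.Icc x y, l ≤ u ^ β) (hb : ∀ u ∈ Set.Icc x y, u ^ β ≤ b) :
    ∫ u in x..y, u ^ β * (u - s) ^ (-(1/2) : ℝ) ∈
      Set.Icc (l * (2 * (√(y - s) - √(x - s)))) (b * (2 * (√(y - s) - √(x - s)))) := by
  have h0 : (-1 : ℝ) < -(1/2) := by norm_num
  have hi := intervalIntegrable_sub_rpow h0 s x y
  have hi' := intervalIntegrable_rpow_mul_sub_rpow (β := β) (s := s) h0 hx hxy
  rw [← integral_sub_rpow_neg_half, ← intervalIntegral.integral_const_mul,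
    ← intervalIntegral.integral_const_mul]
  constructor
  · refine intervalIntegral.integral_mono_on hxy (hi.const_mul _) hi' fun u hu => ?_
    exact mul_le_mul_of_nonneg_right (hl u hu) (Real.rpow_nonneg (by linarith [hu.1]) _)
  · refine intervalIntegral.integral_mono_on hxy hi' (hi.const_mul _) fun u hu => ?_
    exact mul_le_mul_of_nonneg_right (hb u hu) (Real.rpow_nonneg (by linarith [hu.1]) _)

theorem rpow_mem_Icc {β t u : ℝ} (ht : 0 < t) (hu : u ∈ Set.Icc t (t + 1)) :
    u ^ β ∈ Set.Icc (t ^ β * min 1 ((1 + t⁻¹) ^ β)) (t ^ β * max 1 ((1 + t⁻¹) ^ β)) := by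
  have htβ := Real.rpow_pos_of_pos ht β
  have e : (t + 1) ^ β = t ^ β * (1 + t⁻¹) ^ β := by
    rw [← Real.mul_rpow ht.le (by positivity)]
    congr 1
    field_simp
  rw [mul_min_of_nonneg _ _ htβ.le, mul_max_of_nonneg _ _ htβ.le, mul_one, ← e]
  rcases le_total 0 β with h | h
  · exact ⟨min_le_of_left_le (Real.rpow_le_rpow ht.le hu.1 h),
      le_max_of_le_right (Real.rpow_le_rpow (ht.le.trans hu.1) hu.2 h)⟩
  · exact ⟨min_le_of_right_le (Real.rpow_le_rpow_of_nonpos (ht.trans_le hu.1) hu.2 h),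
      le_max_of_le_left (Real.rpow_le_rpow_of_nonpos ht hu.1 h)⟩

theorem tendsto_one_add_inv_rpow (β : ℝ) :
    Tendsto (fun t : ℝ => (1 + t⁻¹) ^ β) atTop (nhds 1) := by
  have h : Tendsto (fun t : ℝ => 1 + t⁻¹) atTop (nhds 1) := by
    simpa using tendsto_inv_atTop_zero.const_add (1 : ℝ)
  simpa using h.rpow_const (p := β) (Or.inl one_ne_zero)

theorem integral_rpow_mul_sub_rpow_le {β ε q s : ℝ} (hε : 0 < ε) (hε' : ε ≤ 1/2)
    (hq : 0 ≤ q) (hβq : -(1/2) + ε ≤ β + q) (hs : 0 < s) (hs1 : s ≤ 1) :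
    ∫ u in s..1, u ^ β * (u - s) ^ (-(1/2) : ℝ) ≤ s ^ (-q) * ε⁻¹ := by
  have hi := intervalIntegrable_rpow_mul_sub_rpow (β := β) (s := s)
    (by norm_num : (-1 : ℝ) < -(1/2)) hs hs1
  calc ∫ u in s..1, u ^ β * (u - s) ^ (-(1/2) : ℝ)
      ≤ ∫ u in s..1, s ^ (-q) * (u - s) ^ (ε - 1) := by
        refine intervalIntegral.integral_mono_on_of_le_Ioo hs1 hi
          ((intervalIntegrable_sub_rpow (by linarith) s s 1).const_mul _) fun u hu => ?_
        have hu0 : 0 < u := hs.trans hu.1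
        have hus : 0 < u - s := sub_pos.2 hu.1
        have h1 : u ^ (-q) ≤ s ^ (-q) :=
          Real.rpow_le_rpow_of_nonpos hs hu.1.le (by linarith)
        have h2 : u ^ (β + q) ≤ (u - s) ^ (-(1/2) + ε) :=
          (Real.rpow_le_rpow_of_exponent_ge hu0 hu.2.le hβq).trans
            (Real.rpow_le_rpow_of_nonpos hus (by linarith) (by linarith))
        have e1 : u ^ β = u ^ (-q) * u ^ (β + q) := by
          rw [← Real.rpow_add hu0]; congr 1; ring
        have e2 : (u - s) ^ (ε - 1) = (u - s) ^ (-(1/2) + ε) * (u - s) ^ (-(1/2) : ℝ) := by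
          rw [← Real.rpow_add hus]; congr 1; ring
        rw [e1, e2, ← mul_assoc]
        gcongr
    _ = s ^ (-q) * ((1 - s) ^ ε * ε⁻¹) := by
        rw [intervalIntegral.integral_const_mul,
          intervalIntegral.integral_comp_sub_right (fun u => u ^ (ε - 1)) s,
          integral_rpow (Or.inl (by linarith))]
        simp [hε.ne', div_eq_mul_inv]
    _ ≤ s ^ (-q) * (1 * ε⁻¹) := by
        gcongr
        exact Real.rpow_le_one (by linarith) (by linarith) hε.le
    _ = s ^ (-q) * ε⁻¹ := by rw [one_mul]

/-- The integral of `u ^ β * (u - s) ^ (-1/2)` over `u` from `x` to `y`. -/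
noncomputable def weightedSingularIntegral (β x y s : ℝ) : ℝ :=
  ∫ u in x..y, u ^ β * (u - s) ^ (-(1/2) : ℝ)

theorem measurable_weightedSingularIntegral (β : ℝ) {a b : ℝ → ℝ} (ha : Measurable a)
    (hb : Measurable b) : Measurable fun s => weightedSingularIntegral β (a s) (b s) s := by
  refine measurable_intervalIntegral (k := fun s u => u ^ β * (u - s) ^ (-(1/2) : ℝ)) ha hb ?_
  unfold Function.uncurry
  fun_prop

theorem weightedSingularIntegral_pos {β s : ℝ} (hs : 0 < s) (hs1 : s < 1) :
    0 < weightedSingularIntegral β s 1 s := by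
  refine intervalIntegral_pos_of_pos_on
    (intervalIntegrable_rpow_mul_sub_rpow (by norm_num) hs hs1.le) (fun u hu => ?_) hs1
  exact mul_pos (Real.rpow_pos_of_pos (hs.trans hu.1) _)
    (Real.rpow_pos_of_pos (sub_pos.2 hu.1) _)

theorem exists_weightedSingularIntegral_le {α β : ℝ} (hα : -(1/2) < α) (hαβ : -1 < α + β) :
    ∃ q K : ℝ, 0 ≤ q ∧ -1 < 2 * α - 2 * q ∧ 0 < K ∧
      ∀ s ∈ Set.Ioc (0:ℝ) 1, |weightedSingularIntegral β s 1 s| ≤ K * s ^ (-q) := by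
  set ε := min ((α + β + 1) / 2) (1/2) with hε
  have h0 : 0 < ε := lt_min (by linarith) (by norm_num)
  have h1 : ε ≤ 1/2 := min_le_right _ _
  have h2 : ε ≤ (α + β + 1) / 2 := min_le_left _ _
  refine ⟨max 0 (-(1/2) + ε - β), ε⁻¹, le_max_left _ _, ?_, inv_pos.2 h0, fun s hs => ?_⟩
  · have : max 0 (-(1/2) + ε - β) < α + 1/2 := max_lt (by linarith) (by linarith)
    linarith
  · have hpos : 0 ≤ weightedSingularIntegral β s 1 s := by
      refine intervalIntegral.integral_nonneg hs.2 fun u hu => ?_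
      exact mul_nonneg (Real.rpow_nonneg (hs.1.le.trans hu.1) _)
        (Real.rpow_nonneg (sub_nonneg.2 hu.1) _)
    rw [abs_of_nonneg hpos, mul_comm]
    refine integral_rpow_mul_sub_rpow_le h0 h1 (le_max_left _ _) ?_ hs.1 hs.2
    linarith [le_max_right 0 (-(1/2) + ε - β)]

theorem intervalIntegrable_rpow_mul_weightedSingularIntegral {α β : ℝ} (hα : -(1/2) < α)
    (hαβ : -1 < α + β) :
    IntervalIntegrable (fun s => s ^ (2 * α) * weightedSingularIntegral β s 1 s) volume 0 1 := by
  obtain ⟨q, K, hq, hq', hK, h⟩ := exists_weightedSingularIntegral_le hα hαβ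
  refine ((intervalIntegral.intervalIntegrable_rpow' (r := 2 * α - q)
    (by linarith)).const_mul K).mono_fun' ?_ ?_
  · have := measurable_weightedSingularIntegral β measurable_id (measurable_const (a := (1:ℝ)))
    exact Measurable.aestronglyMeasurable (by fun_prop)
  · refine (ae_restrict_iff' measurableSet_uIoc).2 (ae_of_all _ fun s hs => ?_)
    rw [Set.uIoc_of_le zero_le_one] at hs
    beta_reduce
    have hsα : 0 < s ^ (2 * α) := Real.rpow_pos_of_pos hs.1 _
    rw [sub_eq_add_neg, Real.rpow_add hs.1, Real.norm_eq_abs, abs_mul, abs_of_pos hsα]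
    calc _ ≤ s ^ (2 * α) * (K * s ^ (-q)) := by gcongr; exact h s hs
      _ = _ := by ring

theorem intervalIntegrable_rpow_mul_weightedSingularIntegral_sq {α β : ℝ} (hα : -(1/2) < α)
    (hαβ : -1 < α + β) :
    IntervalIntegrable (fun s => s ^ (2 * α) * weightedSingularIntegral β s 1 s ^ 2)
      volume 0 1 := by
  obtain ⟨q, K, hq, hq', hK, h⟩ := exists_weightedSingularIntegral_le hα hαβ
  refine ((intervalIntegral.intervalIntegrable_rpow' (r := 2 * α + (-q + -q))
    (by linarith)).const_mul (K ^ 2)).mono_fun' ?_ ?_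
  · have := measurable_weightedSingularIntegral β measurable_id (measurable_const (a := (1:ℝ)))
    exact Measurable.aestronglyMeasurable (by fun_prop)
  · refine (ae_restrict_iff' measurableSet_uIoc).2 (ae_of_all _ fun s hs => ?_)
    rw [Set.uIoc_of_le zero_le_one] at hs
    beta_reduce
    have hsα : 0 < s ^ (2 * α) := Real.rpow_pos_of_pos hs.1 _
    rw [Real.rpow_add hs.1, Real.rpow_add hs.1, Real.norm_eq_abs, abs_mul, abs_of_pos hsα, abs_pow]
    calc _ ≤ s ^ (2 * α) * (K * s ^ (-q)) ^ 2 := by gcongr; exact h s hs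
      _ = _ := by ring

theorem two_mul_sqrt_sub_sqrt_mem_Icc {b : ℝ} (hb : 0 < b) :
    2 * (√(b + 1) - √b) ∈ Set.Icc (√(b + 1))⁻¹ (√b)⁻¹ := by
  have h1 : 0 < √b := Real.sqrt_pos.2 hb
  have h2 : √b ≤ √(b + 1) := Real.sqrt_le_sqrt (by linarith)
  have e1 := Real.sq_sqrt hb.le
  have e2 := Real.sq_sqrt (by linarith : 0 ≤ b + 1)
  constructor
  · rw [inv_le_iff_one_le_mul₀ (h1.trans_le h2)]
    nlinarith
  · rw [le_inv_comm₀ (by nlinarith) h1, le_inv_comm₀ h1 (by nlinarith)]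
    rw [← one_div, le_div_iff₀ h1]
    nlinarith

theorem weightedSingularIntegral_mem_Icc {β t s : ℝ} (ht : 1 < t) (hs : s ∈ Set.Icc (0:ℝ) 1) :
    weightedSingularIntegral β t (t + 1) s ∈ Set.Icc
      (t ^ β * min 1 ((1 + t⁻¹) ^ β) * (√(t + 1))⁻¹)
      (t ^ β * max 1 ((1 + t⁻¹) ^ β) * (√(t - 1))⁻¹) := by
  have ht0 : 0 < t := by linarith
  have h := integral_rpow_mul_sub_rpow_mem_Icc (s := s) ht0 (by linarith [hs.2])
    (by linarith : t ≤ t + 1) (fun u hu => (rpow_mem_Icc (β := β) ht0 hu).1)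
    (fun u hu => (rpow_mem_Icc ht0 hu).2)
  have h2 := two_mul_sqrt_sub_sqrt_mem_Icc (b := t - s) (by linarith [hs.2])
  rw [show t - s + 1 = t + 1 - s by ring] at h2
  have htβ := Real.rpow_pos_of_pos ht0 β
  have hβ' := Real.rpow_pos_of_pos (by positivity : 0 < 1 + t⁻¹) β
  have hl : 0 ≤ t ^ β * min 1 ((1 + t⁻¹) ^ β) := by positivity
  have hh : 0 ≤ t ^ β * max 1 ((1 + t⁻¹) ^ β) := by positivity
  constructor
  · refine le_trans (mul_le_mul_of_nonneg_left (le_trans ?_ h2.1) hl) h.1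
    refine inv_anti₀ (Real.sqrt_pos.2 (by linarith [hs.2])) (Real.sqrt_le_sqrt (by linarith [hs.1]))
  · refine h.2.trans (mul_le_mul_of_nonneg_left (h2.2.trans ?_) hh)
    exact inv_anti₀ (Real.sqrt_pos.2 (by linarith)) (Real.sqrt_le_sqrt (by linarith [hs.2]))

theorem tendsto_min_one_add_inv_rpow (β : ℝ) :
    Tendsto (fun t : ℝ => min 1 ((1 + t⁻¹) ^ β)) atTop (nhds 1) := by
  simpa using (tendsto_const_nhds (x := (1:ℝ))).min (tendsto_one_add_inv_rpow β)

theorem tendsto_max_one_add_inv_rpow (β : ℝ) :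
    Tendsto (fun t : ℝ => max 1 ((1 + t⁻¹) ^ β)) atTop (nhds 1) := by
  simpa using (tendsto_const_nhds (x := (1:ℝ))).max (tendsto_one_add_inv_rpow β)

theorem tendsto_sqrt_mul_inv_sqrt_add (a : ℝ) :
    Tendsto (fun t : ℝ => √t * (√(t + a))⁻¹) atTop (nhds 1) := by
  have h : Tendsto (fun t : ℝ => √((1 + a * t⁻¹)⁻¹)) atTop (nhds 1) := by
    have h1 : Tendsto (fun t : ℝ => 1 + a * t⁻¹) atTop (nhds 1) := by
      simpa using (tendsto_inv_atTop_zero.const_mul a).const_add (1 : ℝ)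
    simpa using (h1.inv₀ one_ne_zero).sqrt
  refine h.congr' ?_
  filter_upwards [eventually_gt_atTop 0, eventually_gt_atTop (-a)] with t ht hta
  rw [← Real.sqrt_inv, ← Real.sqrt_mul ht.le]
  congr 1
  have : t + a ≠ 0 := by linarith
  field_simp

theorem tendsto_covariance {α β : ℝ} (hα : -(1/2) < α) (hαβ : -1 < α + β) :
    Tendsto (fun t : ℝ => t ^ (1/2 - β) * ∫ s in (0:ℝ)..1, s ^ (2 * α) *
        weightedSingularIntegral β s 1 s * weightedSingularIntegral β t (t + 1) s) atTop
      (nhds (∫ s in (0:ℝ)..1, s ^ (2 * α) * weightedSingularIntegral β s 1 s)) := by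
  set A := ∫ s in (0:ℝ)..1, s ^ (2 * α) * weightedSingularIntegral β s 1 s with hA
  have hint := intervalIntegrable_rpow_mul_weightedSingularIntegral hα hαβ
  have hlo : Tendsto (fun t : ℝ => min 1 ((1 + t⁻¹) ^ β) * (√t * (√(t + 1))⁻¹) * A) atTop
      (nhds A) := by
    simpa using ((tendsto_min_one_add_inv_rpow β).mul
      (tendsto_sqrt_mul_inv_sqrt_add 1)).mul_const A
  have hhi : Tendsto (fun t : ℝ => max 1 ((1 + t⁻¹) ^ β) * (√t * (√(t + -1))⁻¹) * A) atTop
      (nhds A) := by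
    simpa using ((tendsto_max_one_add_inv_rpow β).mul
      (tendsto_sqrt_mul_inv_sqrt_add (-1))).mul_const A
  have hnn : ∀ s ∈ Set.Ioo (0:ℝ) 1, 0 ≤ s ^ (2 * α) * weightedSingularIntegral β s 1 s :=
    fun s hs => mul_nonneg (Real.rpow_nonneg hs.1.le _)
      (weightedSingularIntegral_pos hs.1 hs.2).le
  have hint2 : ∀ t : ℝ, 1 < t → IntervalIntegrable (fun s => s ^ (2 * α) *
        weightedSingularIntegral β s 1 s * weightedSingularIntegral β t (t + 1) s) volume 0 1 := by
    intro t ht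
    set M := t ^ β * max 1 ((1 + t⁻¹) ^ β) * (√(t - 1))⁻¹ with hM
    refine (hint.norm.mul_const M).mono_fun' ?_ ?_
    · have h1 := measurable_weightedSingularIntegral β measurable_id
        (measurable_const (a := (1:ℝ)))
      have h2 := measurable_weightedSingularIntegral β (measurable_const (a := t))
        (measurable_const (a := t + 1))
      exact Measurable.aestronglyMeasurable (by fun_prop)
    · refine (ae_restrict_iff' measurableSet_uIoc).2 (ae_of_all _ fun s hs => ?_)
      rw [Set.uIoc_of_le zero_le_one] at hs
      have h := weightedSingularIntegral_mem_Icc (β := β) ht (Set.Ioc_subset_Icc_self hs)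
      have h0 : 0 ≤ weightedSingularIntegral β t (t + 1) s := le_trans (by positivity) h.1
      simp only [norm_mul]
      gcongr
      rw [Real.norm_of_nonneg h0]
      exact h.2
  have hpow : ∀ t : ℝ, 0 < t → t ^ (1/2 - β) * t ^ β = √t := by
    intro t ht
    rw [← Real.rpow_add ht, Real.sqrt_eq_rpow]
    congr 1; ring
  refine tendsto_of_tendsto_of_tendsto_of_le_of_le' hlo hhi ?_ ?_
  · filter_upwards [eventually_gt_atTop 1] with t ht
    have ht0 : 0 < t := by linarith
    calc _ = t ^ (1/2 - β) * ((t ^ β * min 1 ((1 + t⁻¹) ^ β) * (√(t + 1))⁻¹) * A) := by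
          rw [← hpow t ht0]; ring
      _ ≤ _ := by
          refine mul_le_mul_of_nonneg_left ?_ (Real.rpow_nonneg ht0.le _)
          rw [mul_comm, hA, ← intervalIntegral.integral_mul_const]
          refine intervalIntegral.integral_mono_on_of_le_Ioo zero_le_one (hint.mul_const _)
            (hint2 t ht) fun s hs => mul_le_mul_of_nonneg_left ?_ (hnn s hs)
          exact (weightedSingularIntegral_mem_Icc ht (Set.Ioo_subset_Icc_self hs)).1
  · filter_upwards [eventually_gt_atTop 1] with t ht
    have ht0 : 0 < t := by linarith
    calc _ ≤ t ^ (1/2 - β) * ((t ^ β * max 1 ((1 + t⁻¹) ^ β) * (√(t - 1))⁻¹) * A) := by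
          refine mul_le_mul_of_nonneg_left ?_ (Real.rpow_nonneg ht0.le _)
          rw [mul_comm _ A, hA, ← intervalIntegral.integral_mul_const]
          refine intervalIntegral.integral_mono_on_of_le_Ioo zero_le_one (hint2 t ht)
            (hint.mul_const _) fun s hs => mul_le_mul_of_nonneg_left ?_ (hnn s hs)
          exact (weightedSingularIntegral_mem_Icc ht (Set.Ioo_subset_Icc_self hs)).2
      _ = _ := by
          rw [← hpow t ht0, sub_eq_add_neg t]; ring

theorem abs_sqrt_sub_sqrt_sq_sub_le {x : ℝ} (hx : 0 ≤ x) :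
    |(2 * (√x - √(max 0 (x - 1)))) ^ 2 - (x + 1)⁻¹| ≤ 16 * ((x + 1) ^ 2)⁻¹ := by
  have hx1 : 0 < x + 1 := by linarith
  rcases le_total x 1 with h | h
  · rw [max_eq_left (by linarith), Real.sqrt_zero, sub_zero, mul_pow, Real.sq_sqrt hx]
    have e : 2 ^ 2 * x - (x + 1)⁻¹ = (4 * x * (x + 1) ^ 2 - (x + 1)) * ((x + 1) ^ 2)⁻¹ := by
      field_simp; ring
    rw [e, abs_mul, abs_of_pos (a := ((x + 1) ^ 2)⁻¹) (by positivity)]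
    gcongr
    rw [abs_le]
    constructor <;> nlinarith [mul_nonneg hx (sq_nonneg x), mul_nonneg hx hx]
  · rw [max_eq_right (by linarith)]
    have e1 := Real.sq_sqrt hx
    have e2 := Real.sq_sqrt (by linarith : 0 ≤ x - 1)
    have h2 : √(x - 1) ≤ √x := Real.sqrt_le_sqrt (by linarith)
    have h0 := Real.sqrt_nonneg (x - 1)
    set a := √x
    set b := √(x - 1)
    have hm : (a - b) * (a + b) = 1 := by nlinarith
    have hL : (x + 1)⁻¹ ≤ (2 * (a - b)) ^ 2 := by
      rw [inv_le_iff_one_le_mul₀ hx1]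
      have : (a + b) ^ 2 ≤ 4 * (x + 1) := by nlinarith
      have h3 : 0 ≤ (a - b) ^ 2 := sq_nonneg _
      nlinarith [mul_le_mul_of_nonneg_left this h3]
    have hU : (2 * (a - b)) ^ 2 * (x - 3/4) ≤ 1 := by
      have : 4 * (x - 3/4) ≤ (a + b) ^ 2 := by nlinarith
      have h3 : 0 ≤ (a - b) ^ 2 := sq_nonneg _
      nlinarith [mul_le_mul_of_nonneg_left this h3]
    rw [abs_of_nonneg (by linarith), sub_le_iff_le_add]
    have hx' : 0 < x - 3/4 := by linarith
    rw [← le_div_iff₀ hx'] at hU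
    refine hU.trans ?_
    have e : 16 * ((x + 1) ^ 2)⁻¹ + (x + 1)⁻¹ = (x + 17) / (x + 1) ^ 2 := by
      field_simp; ring
    rw [e, div_le_div_iff₀ hx' (by positivity)]
    nlinarith

theorem sqrt_sub_sqrt_sq_le {x : ℝ} (hx : 0 ≤ x) :
    (2 * (√x - √(max 0 (x - 1)))) ^ 2 ≤ 17 * (x + 1)⁻¹ := by
  have h := (abs_le.1 (abs_sqrt_sub_sqrt_sq_sub_le hx)).2
  have : ((x + 1) ^ 2)⁻¹ ≤ (x + 1)⁻¹ := inv_anti₀ (by linarith) (by nlinarith)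
  linarith

theorem abs_integral_rpow_mul_sqrt_sub_sqrt_sq_sub_le {p T : ℝ} (hp : -1 < p) (hT : 0 < T) :
    |(∫ s in (0:ℝ)..T, s ^ p * (2 * (√(T - s) - √(max 0 (T - s - 1)))) ^ 2)
      - T ^ p * Real.log (T + 1)| ≤ (17 * (1 + |p|) * (1 + (p + 1)⁻¹) + 16) * T ^ p := by
  have hTp : 0 < T ^ p := Real.rpow_pos_of_pos hT p
  have hi : IntervalIntegrable (fun s : ℝ => s ^ p) volume 0 T :=
    intervalIntegral.intervalIntegrable_rpow' hp
  have hi1 : IntervalIntegrable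
      (fun s => s ^ p * (2 * (√(T - s) - √(max 0 (T - s - 1)))) ^ 2) volume 0 T :=
    hi.mul_continuousOn (by fun_prop)
  have hne : ∀ s ∈ Set.uIcc 0 T, T + 1 - s ≠ 0 := by
    intro s hs
    rw [Set.uIcc_of_le hT.le] at hs
    linarith [hs.2]
  have hi2 : IntervalIntegrable (fun s => T ^ p * (T + 1 - s)⁻¹) volume 0 T :=
    (ContinuousOn.inv₀ (by fun_prop) hne).intervalIntegrable.const_mul _
  have hi3 : IntervalIntegrable (fun s => ((T + 1 - s) ^ 2)⁻¹) volume 0 T :=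
    (ContinuousOn.inv₀ (by fun_prop) fun s hs => pow_ne_zero 2 (hne s hs)).intervalIntegrable
  have e2 : ∫ s in (0:ℝ)..T, T ^ p * (T + 1 - s)⁻¹ = T ^ p * Real.log (T + 1) := by
    rw [intervalIntegral.integral_const_mul,
      intervalIntegral.integral_comp_sub_left (fun x => x⁻¹) (T + 1),
      integral_inv_of_pos (by linarith) (by linarith)]
    simp
  have e3 : ∫ s in (0:ℝ)..T, ((T + 1 - s) ^ 2)⁻¹ ≤ 1 := by
    rw [intervalIntegral.integral_comp_sub_left (fun x => (x ^ 2)⁻¹) (T + 1)]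
    have : ∀ x : ℝ, (x ^ 2)⁻¹ = x ^ (-2 : ℤ) := fun x => by
      rw [zpow_neg]; norm_cast
    simp only [this]
    rw [integral_zpow (Or.inr ⟨by norm_num, by
      rw [Set.uIcc_of_le (by linarith)]; intro h; linarith [h.1]⟩)]
    norm_num
    rw [div_le_iff_of_neg (by norm_num)]
    have : 0 ≤ (T + 1)⁻¹ := by positivity
    linarith
  have hi4 : IntervalIntegrable (fun s => 17 * (1 + |p|) / T * (T ^ p + s ^ p)) volume 0 T :=
    (intervalIntegrable_const.add hi).const_mul _
  have e4 : ∫ s in (0:ℝ)..T, 17 * (1 + |p|) / T * (T ^ p + s ^ p) =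
      17 * (1 + |p|) * (1 + (p + 1)⁻¹) * T ^ p := by
    rw [intervalIntegral.integral_const_mul, intervalIntegral.integral_add
      intervalIntegrable_const hi, integral_rpow (Or.inl hp), intervalIntegral.integral_const,
      Real.zero_rpow (by linarith), Real.rpow_add_one hT.ne']
    have : p + 1 ≠ 0 := by linarith
    simp only [smul_eq_mul]
    field_simp
    ring
  rw [← e2, ← intervalIntegral.integral_sub hi1 hi2, ← Real.norm_eq_abs]
  calc _ ≤ ∫ s in (0:ℝ)..T, (17 * (1 + |p|) / T * (T ^ p + s ^ p) +
          16 * T ^ p * ((T + 1 - s) ^ 2)⁻¹) := by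
        refine intervalIntegral.norm_integral_le_of_norm_le hT.le (ae_of_all _ fun s hs => ?_)
          (hi4.add (hi3.const_mul _))
        have hx : 0 ≤ T - s := by linarith [hs.2]
        have h1 := abs_sqrt_sub_sqrt_sq_sub_le hx
        have h2 := sqrt_sub_sqrt_sq_le hx
        have h3 := abs_rpow_sub_rpow_le hp hs.1 hs.2
        have hsp : 0 < s ^ p := Real.rpow_pos_of_pos hs.1 p
        rw [show T - s + 1 = T + 1 - s by ring] at h1 h2
        set J := (2 * (√(T - s) - √(max 0 (T - s - 1)))) ^ 2 with hJ
        have hJ0 : 0 ≤ J := sq_nonneg _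
        have hy : 0 < T + 1 - s := by linarith
        have h4 : (T - s) * J ≤ 17 := by
          calc (T - s) * J ≤ (T + 1 - s) * (17 * (T + 1 - s)⁻¹) := by gcongr; linarith
            _ = 17 := by field_simp
        have eq : s ^ p * J - T ^ p * (T + 1 - s)⁻¹ =
          (s ^ p - T ^ p) * J + T ^ p * (J - (T + 1 - s)⁻¹) := by ring
        rw [Real.norm_eq_abs, eq]
        refine (abs_add_le _ _).trans (add_le_add ?_ ?_)
        · rw [abs_mul, abs_of_nonneg hJ0]
          calc _ ≤ (1 + |p|) * ((T - s) / T) * (T ^ p + s ^ p) * J := by gcongr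
            _ = (1 + |p|) / T * (T ^ p + s ^ p) * ((T - s) * J) := by ring
            _ ≤ (1 + |p|) / T * (T ^ p + s ^ p) * 17 := by gcongr
            _ = _ := by ring
        · rw [abs_mul, abs_of_pos hTp]
          calc _ ≤ T ^ p * (16 * ((T + 1 - s) ^ 2)⁻¹) := by gcongr
            _ = _ := by ring
    _ ≤ _ := by
        rw [intervalIntegral.integral_add hi4 (hi3.const_mul _), e4,
          intervalIntegral.integral_const_mul, add_mul]
        have := mul_le_mul_of_nonneg_left e3 (by positivity : 0 ≤ 16 * T ^ p)
        linarith

theorem tendsto_log_add_div_log (a : ℝ) :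
    Tendsto (fun t : ℝ => Real.log (t + a) / Real.log t) atTop (nhds 1) := by
  have h0 : Tendsto (fun t : ℝ => (Real.log t)⁻¹) atTop (nhds 0) :=
    Real.tendsto_log_atTop.inv_tendsto_atTop
  have h1 : Tendsto (fun t : ℝ => 1 + a * t⁻¹) atTop (nhds 1) := by
    simpa using (tendsto_inv_atTop_zero.const_mul a).const_add (1 : ℝ)
  have h : Tendsto (fun t : ℝ => 1 + Real.log (1 + a * t⁻¹) * (Real.log t)⁻¹) atTop (nhds 1) := by
    simpa using ((h1.log one_ne_zero).mul h0).const_add 1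
  refine h.congr' ?_
  filter_upwards [eventually_gt_atTop 1, eventually_gt_atTop (-a)] with t ht hta
  have ht0 : 0 < t := by linarith
  have hlog : Real.log t ≠ 0 := (Real.log_pos ht).ne'
  have e : t + a = t * (1 + a * t⁻¹) := by field_simp
  have hne : 1 + a * t⁻¹ ≠ 0 := fun h => by rw [h] at e; linarith
  rw [e, Real.log_mul ht0.ne' hne]
  field_simp

theorem tendsto_integral_rpow_mul_sqrt_sub_sqrt_sq {p : ℝ} (hp : -1 < p) :
    Tendsto (fun t : ℝ => (t ^ p * Real.log t)⁻¹ *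
        ∫ s in (0:ℝ)..(t + 1), s ^ p * (2 * (√(t + 1 - s) - √(max 0 (t + 1 - s - 1)))) ^ 2)
      atTop (nhds 1) := by
  set K := 17 * (1 + |p|) * (1 + (p + 1)⁻¹) + 16
  have h1 := (tendsto_one_add_inv_rpow p).mul (tendsto_log_add_div_log (1 + 1))
  rw [mul_one] at h1
  have h2 : Tendsto (fun t : ℝ => K * ((1 + t⁻¹) ^ p * (Real.log t)⁻¹)) atTop (nhds 0) := by
    simpa using ((tendsto_one_add_inv_rpow p).mul
      Real.tendsto_log_atTop.inv_tendsto_atTop).const_mul K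
  have h3 : Tendsto (fun t : ℝ => (t ^ p * Real.log t)⁻¹ *
        (∫ s in (0:ℝ)..(t + 1), s ^ p * (2 * (√(t + 1 - s) - √(max 0 (t + 1 - s - 1)))) ^ 2)
        - (1 + t⁻¹) ^ p * (Real.log (t + (1 + 1)) / Real.log t)) atTop (nhds 0) := by
    refine squeeze_zero_norm' ?_ h2
    filter_upwards [eventually_gt_atTop 1] with t ht
    have ht0 : 0 < t := by linarith
    have hlog : 0 < Real.log t := Real.log_pos ht
    have htp : 0 < t ^ p := Real.rpow_pos_of_pos ht0 p
    have e : (t + 1) ^ p = t ^ p * (1 + t⁻¹) ^ p := by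
      rw [← Real.mul_rpow ht0.le (by positivity)]
      congr 1
      field_simp
    have h := abs_integral_rpow_mul_sqrt_sub_sqrt_sq_sub_le hp (by linarith : 0 < t + 1)
    rw [e] at h
    set W := ∫ s in (0:ℝ)..(t + 1), s ^ p * (2 * (√(t + 1 - s) - √(max 0 (t + 1 - s - 1)))) ^ 2
    have e1 : (t ^ p * Real.log t)⁻¹ * W
        - (1 + t⁻¹) ^ p * (Real.log (t + (1 + 1)) / Real.log t) =
        (t ^ p * Real.log t)⁻¹ * (W - t ^ p * (1 + t⁻¹) ^ p * Real.log (t + 1 + 1)) := by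
      rw [add_assoc t]; field_simp
    rw [e1, norm_mul, Real.norm_of_nonneg (by positivity), Real.norm_eq_abs]
    calc _ ≤ (t ^ p * Real.log t)⁻¹ * (K * (t ^ p * (1 + t⁻¹) ^ p)) := by gcongr
      _ = _ := by field_simp
  simpa using h3.add h1

theorem weightedSingularIntegral_max_mem_Icc {β t s : ℝ} (ht : 0 < t) (hs : s ≤ t + 1) :
    weightedSingularIntegral β (max s t) (t + 1) s ∈ Set.Icc
      (t ^ β * min 1 ((1 + t⁻¹) ^ β) * (2 * (√(t + 1 - s) - √(max 0 (t + 1 - s - 1)))))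
      (t ^ β * max 1 ((1 + t⁻¹) ^ β) * (2 * (√(t + 1 - s) - √(max 0 (t + 1 - s - 1))))) := by
  have hsub : ∀ u ∈ Set.Icc (max s t) (t + 1), u ∈ Set.Icc t (t + 1) :=
    fun u hu => ⟨(le_max_right _ _).trans hu.1, hu.2⟩
  have h := integral_rpow_mul_sub_rpow_mem_Icc (s := s) (ht.trans_le (le_max_right s t))
    (le_max_left _ _) (max_le hs (by linarith)) (fun u hu => (rpow_mem_Icc (β := β) ht (hsub u hu)).1)
    (fun u hu => (rpow_mem_Icc ht (hsub u hu)).2)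
  rwa [show max s t - s = max 0 (t + 1 - s - 1) by
    rw [← max_sub_sub_right]; congr 1 <;> ring] at h

theorem tendsto_variance {α : ℝ} (hα : -(1/2) < α) (β : ℝ) :
    Tendsto (fun t : ℝ => ((t ^ (α + β)) ^ 2 * Real.log t)⁻¹ * ∫ s in (0:ℝ)..(t + 1),
        s ^ (2 * α) * weightedSingularIntegral β (max s t) (t + 1) s ^ 2) atTop (nhds 1) := by
  have hp : -1 < 2 * α := by linarith
  have hW := tendsto_integral_rpow_mul_sqrt_sub_sqrt_sq hp
  have hlo := ((tendsto_min_one_add_inv_rpow β).pow 2).mul hW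
  have hhi := ((tendsto_max_one_add_inv_rpow β).pow 2).mul hW
  rw [one_pow, one_mul] at hlo hhi
  have hi : ∀ t : ℝ, IntervalIntegrable (fun s : ℝ => s ^ (2 * α) *
      (2 * (√(t + 1 - s) - √(max 0 (t + 1 - s - 1)))) ^ 2) volume 0 (t + 1) := fun t =>
    (intervalIntegral.intervalIntegrable_rpow' hp).mul_continuousOn (by fun_prop)
  have hJ : ∀ t s : ℝ, 0 ≤ 2 * (√(t + 1 - s) - √(max 0 (t + 1 - s - 1))) := by
    intro t s
    rcases le_total 0 (t + 1 - s) with h | h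
    · have : √(max 0 (t + 1 - s - 1)) ≤ √(t + 1 - s) :=
        Real.sqrt_le_sqrt (max_le h (by linarith))
      linarith
    · rw [max_eq_left (by linarith), Real.sqrt_zero, sub_zero]
      positivity
  have hi2 : ∀ t : ℝ, 0 < t → IntervalIntegrable (fun s : ℝ => s ^ (2 * α) *
      weightedSingularIntegral β (max s t) (t + 1) s ^ 2) volume 0 (t + 1) := by
    intro t ht
    refine ((hi t).const_mul ((t ^ β * max 1 ((1 + t⁻¹) ^ β)) ^ 2)).mono_fun' ?_ ?_
    · have := measurable_weightedSingularIntegral β (measurable_id.max (measurable_const (a := t)))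
        (measurable_const (a := t + 1))
      simp only [id] at this
      exact Measurable.aestronglyMeasurable (by fun_prop)
    · refine (ae_restrict_iff' measurableSet_uIoc).2 (ae_of_all _ fun s hs => ?_)
      rw [Set.uIoc_of_le (by linarith)] at hs
      have h := weightedSingularIntegral_max_mem_Icc (β := β) ht hs.2
      have h0 : 0 ≤ weightedSingularIntegral β (max s t) (t + 1) s :=
        le_trans (mul_nonneg (by positivity) (hJ t s)) h.1
      have hs0 := Real.rpow_nonneg hs.1.le (2 * α)
      beta_reduce
      rw [Real.norm_of_nonneg (mul_nonneg hs0 (sq_nonneg _))]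
      calc _ ≤ s ^ (2 * α) * (t ^ β * max 1 ((1 + t⁻¹) ^ β) *
            (2 * (√(t + 1 - s) - √(max 0 (t + 1 - s - 1))))) ^ 2 := by
            gcongr
            exact h.2
        _ = _ := by ring
  have hnorm : ∀ t m W : ℝ, 1 < t → m ^ 2 * ((t ^ (2 * α) * Real.log t)⁻¹ * W) =
      ((t ^ (α + β)) ^ 2 * Real.log t)⁻¹ * ((t ^ β * m) ^ 2 * W) := by
    intro t m W ht
    have ht0 : 0 < t := by linarith
    have hlog : 0 < Real.log t := Real.log_pos ht
    have h1 := Real.rpow_pos_of_pos ht0 α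
    have h2 := Real.rpow_pos_of_pos ht0 β
    rw [two_mul, Real.rpow_add ht0, Real.rpow_add ht0]
    field_simp
  refine tendsto_of_tendsto_of_tendsto_of_le_of_le' hlo hhi ?_ ?_
  · filter_upwards [eventually_gt_atTop 1] with t ht
    have ht0 : 0 < t := by linarith
    have hlog : 0 < Real.log t := Real.log_pos ht
    rw [hnorm t _ _ ht, ← intervalIntegral.integral_const_mul ((t ^ β * min 1 ((1 + t⁻¹) ^ β)) ^ 2)]
    refine mul_le_mul_of_nonneg_left ?_ (by positivity)
    refine intervalIntegral.integral_mono_on (by linarith) ((hi t).const_mul _) (hi2 t ht0)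
      fun s hs => ?_
    have h := (weightedSingularIntegral_max_mem_Icc (β := β) ht0 hs.2).1
    have h0 := mul_nonneg (by positivity : (0:ℝ) ≤ t ^ β * min 1 ((1 + t⁻¹) ^ β)) (hJ t s)
    have hs0 := Real.rpow_nonneg hs.1 (2 * α)
    calc _ = s ^ (2 * α) * (t ^ β * min 1 ((1 + t⁻¹) ^ β) *
            (2 * (√(t + 1 - s) - √(max 0 (t + 1 - s - 1))))) ^ 2 := by ring
      _ ≤ _ := by gcongr
  · filter_upwards [eventually_gt_atTop 1] with t ht
    have ht0 : 0 < t := by linarith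
    have hlog : 0 < Real.log t := Real.log_pos ht
    rw [hnorm t _ _ ht, ← intervalIntegral.integral_const_mul ((t ^ β * max 1 ((1 + t⁻¹) ^ β)) ^ 2)]
    refine mul_le_mul_of_nonneg_left ?_ (by positivity)
    refine intervalIntegral.integral_mono_on (by linarith) (hi2 t ht0) ((hi t).const_mul _)
      fun s hs => ?_
    have h := weightedSingularIntegral_max_mem_Icc (β := β) ht0 hs.2
    have h0 := le_trans
      (mul_nonneg (by positivity : (0:ℝ) ≤ t ^ β * min 1 ((1 + t⁻¹) ^ β)) (hJ t s)) h.1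
    have hs0 := Real.rpow_nonneg hs.1 (2 * α)
    calc _ ≤ s ^ (2 * α) * (t ^ β * max 1 ((1 + t⁻¹) ^ β) *
            (2 * (√(t + 1 - s) - √(max 0 (t + 1 - s - 1))))) ^ 2 := by
          gcongr
          exact h.2
      _ = _ := by ring

/-- Theorem 3.5, case `γ = -1/2`: asymptotics of the correlation
`corr(X₁, X_{t+1} - X_t)` of the Gaussian Volterra process. -/
theorem stmt_8 (α β γ : ℝ) (hα : -(1/2 : ℝ) < α)
    (hαβγ : -(3/2 : ℝ) < α + β + γ) (hγ' : γ = -(1/2 : ℝ))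
    (F V r : ℝ → ℝ) (C : ℝ)
    (hF : ∀ t : ℝ, F t = ∫ s in (0:ℝ)..1, s ^ (2*α) *
      (∫ u in s..1, u ^ β * (u - s) ^ γ) *
      (∫ v in t..(t+1), v ^ β * (v - s) ^ γ))
    (hV : ∀ t : ℝ, V t = ∫ s in (0:ℝ)..(t+1), s ^ (2*α) *
      (∫ u in (max s t)..(t+1), u ^ β * (u - s) ^ γ) ^ 2)
    (hC : C = ∫ s in (0:ℝ)..1, s ^ (2*α) *
      (∫ u in s..1, u ^ β * (u - s) ^ γ) ^ 2)
    (hr : ∀ t : ℝ, r t = F t / (Real.sqrt C * Real.sqrt (V t))) :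
    ∃ c : ℝ, 0 < c ∧
      Tendsto (fun t : ℝ => t ^ (α + 1/2) * Real.sqrt (Real.log t) * r t)
        atTop (nhds c) := by
  subst hγ'
  have hαβ : -1 < α + β := by linarith
  set A := ∫ s in (0:ℝ)..1, s ^ (2 * α) * weightedSingularIntegral β s 1 s with hA
  have hApos : 0 < A := intervalIntegral_pos_of_pos_on
    (intervalIntegrable_rpow_mul_weightedSingularIntegral hα hαβ)
    (fun s hs => mul_pos (Real.rpow_pos_of_pos hs.1 _)
      (weightedSingularIntegral_pos hs.1 hs.2)) zero_lt_one
  have hCpos : 0 < C := by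
    rw [hC]
    exact intervalIntegral_pos_of_pos_on
      (intervalIntegrable_rpow_mul_weightedSingularIntegral_sq hα hαβ)
      (fun s hs => mul_pos (Real.rpow_pos_of_pos hs.1 _)
        (pow_pos (weightedSingularIntegral_pos hs.1 hs.2) 2)) zero_lt_one
  have hFlim : Tendsto (fun t => t ^ (1/2 - β) * F t) atTop (nhds A) := by
    simp only [hF]
    exact tendsto_covariance hα hαβ
  have hVlim : Tendsto (fun t => ((t ^ (α + β)) ^ 2 * Real.log t)⁻¹ * V t) atTop (nhds 1) := by
    simp only [hV]
    exact tendsto_variance hα β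
  refine ⟨A / √C, div_pos hApos (Real.sqrt_pos.2 hCpos), ?_⟩
  have hlim := (hFlim.div_const √C).div hVlim.sqrt (by simp)
  rw [Real.sqrt_one, div_one] at hlim
  refine hlim.congr' ?_
  filter_upwards [eventually_gt_atTop 1] with t ht
  have ht0 : 0 < t := by linarith
  have hab := Real.rpow_pos_of_pos ht0 (α + β)
  have hlog : 0 < Real.log t := Real.log_pos ht
  have hsl : 0 < √(Real.log t) := Real.sqrt_pos.2 hlog
  have e : t ^ (α + 1/2) = t ^ (1/2 - β) * t ^ (α + β) := by
    rw [← Real.rpow_add ht0]; congr 1; ring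
  simp only [Pi.div_apply]
  rw [hr, e, Real.sqrt_mul (by positivity), Real.sqrt_inv, Real.sqrt_mul (by positivity),
    Real.sqrt_sq hab.le]
  field_simp
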